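/- arXiv:1901.10659 — 2 statements merged into one kernel-verified Lean document; each statement's English description precedes it below -/
import Mathlib

section
/- Let 𝔽 be a field, let d ≥ 1 be an integer, and let V be a (d+1)-dimensional vector space over 𝔽. Let {E*_i}_{i=0}^{d} be a system of mutually orthogonal idempotents in End(V). Let A ∈ End(V) satisfy E*_i A E*_j = 0 if |i−j| > 1 and E*_i A E*_j ≠ 0 if |i−j| = 1 (0 ≤ i,j ≤ d). Let θ*_0,…,θ*_d ∈ 𝔽 and define A* = Σ_{i=0}^{d} θ*_i E*_i. Let θ_0,…,θ_d ∈ 𝔽 and set a_i = tr(E*_i A) for 0 ≤ i ≤ d. Suppose: (i) θ_i ≠ θ_j whenever i ≠ j (0 ≤ i,j ≤ d); (ii) θ*_i ≠ θ*_0 for 1 ≤ i ≤ d; (iii) there exist β, γ* ∈ 𝔽 such that γ* = θ*_{i−1} − βθ*_i + θ*_{i+1} for 1 ≤ i ≤ d−1, and θ*_{−1}, θ*_{d+1} ∈ 𝔽 are defined so that this equation also holds at i = 0 and i = d; (iv) there exist nonzero vectors v_0, v_1 ∈ V such that A v_0 = θ_0 v_0, A v_1 = θ_1 v_1, and A* v_0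 − v_1 ∈ 𝔽 v_0; (v) there exist γ, ω, η* ∈ 𝔽 such that a_i(θ*_i − θ*_{i−1})(θ*_i − θ*_{i+1}) = γθ*_i² + ωθ*_i + η* for 0 ≤ i ≤ d; (vi) θ_{i−1} − βθ_i + θ_{i+1} = γ for 1 ≤ i ≤ d−1. Then A, A* is a Leonard pair on V; moreover, A is multiplicity-free with eigenvalues θ_0,…,θ_d, A* is multiplicity-free with eigenvalues θ*_0,…,θ*_d, and (A; {E_i}_{i=0}^{d}; A*; {E*_i}_{i=0}^{d}) is a Leonard system on V, where E_i denotes the primitive idempotent of A corresponding to θ_i. -/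
namespace LeonardPaper

variable {F : Type*} [Field F] {V : Type*} [AddCommGroup V] [Module F V]

/-- A square matrix is irreducible tridiagonal: entries vanish off the three central
diagonals, and all subdiagonal and superdiagonal entries are nonzero. -/
def IsIrredTridiag {n : ℕ} (M : Matrix (Fin n) (Fin n) F) : Prop :=
  (∀ i j : Fin n, ((i : ℕ) + 1 < (j : ℕ) ∨ (j : ℕ) + 1 < (i : ℕ)) → M i j = 0) ∧
  (∀ i j : Fin n, ((i : ℕ) + 1 = (j : ℕ) ∨ (j : ℕ) + 1 = (i : ℕ)) → M i j ≠ 0)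

/-- Leonard pair on `V` (of dimension `d+1`). -/
def IsLeonardPair (d : ℕ) (A As : Module.End F V) : Prop :=
  (∃ bas : Module.Basis (Fin (d + 1)) F V,
      IsIrredTridiag (LinearMap.toMatrix bas bas A) ∧ (LinearMap.toMatrix bas bas As).IsDiag) ∧
  (∃ bas : Module.Basis (Fin (d + 1)) F V,
      IsIrredTridiag (LinearMap.toMatrix bas bas As) ∧ (LinearMap.toMatrix bas bas A).IsDiag)

/-- A system of mutually orthogonal (rank-one) idempotents in `End(V)`. -/
def MOISys (d : ℕ) (E : Fin (d + 1) → Module.End F V) : Prop :=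
  (∀ i j, E i * E j = if i = j then E i else 0) ∧
  ∀ i, Module.finrank F (LinearMap.range (E i)) = 1

/-- `E` is the system of primitive idempotents of a multiplicity-free `A`,
with eigenvalue ordering `θ`. -/
def IdempSysOf (d : ℕ) (A : Module.End F V) (θ : Fin (d + 1) → F)
    (E : Fin (d + 1) → Module.End F V) : Prop :=
  MOISys d E ∧ (∑ i, E i) = 1 ∧ Function.Injective θ ∧ ∀ i, A * E i = θ i • E i

/-- Leonard system. -/
def IsLeonardSystem (d : ℕ) (A : Module.End F V) (E : Fin (d + 1) → Module.End F V)
    (As : Module.End F V) (Es : Fin (d + 1) → Module.End F V) : Prop :=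
  (∃ θ, IdempSysOf d A θ E) ∧ (∃ θs, IdempSysOf d As θs Es) ∧
  (∀ i j : Fin (d + 1), ((i : ℕ) + 1 < (j : ℕ) ∨ (j : ℕ) + 1 < (i : ℕ)) → Es i * A * Es j = 0) ∧
  (∀ i j : Fin (d + 1), ((i : ℕ) + 1 = (j : ℕ) ∨ (j : ℕ) + 1 = (i : ℕ)) → Es i * A * Es j ≠ 0) ∧
  (∀ i j : Fin (d + 1), ((i : ℕ) + 1 < (j : ℕ) ∨ (j : ℕ) + 1 < (i : ℕ)) → E i * As * E j = 0) ∧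
  (∀ i j : Fin (d + 1), ((i : ℕ) + 1 = (j : ℕ) ∨ (j : ℕ) + 1 = (i : ℕ)) → E i * As * E j ≠ 0)

/-- The tridiagonal matrix with diagonal `a`, superdiagonal `b`, subdiagonal `c`. -/
def triMat (d : ℕ) (a b c : ℕ → F) : Matrix (Fin (d + 1)) (Fin (d + 1)) F :=
  Matrix.of fun i j : Fin (d + 1) =>
    if (i : ℕ) = (j : ℕ) then a i
    else if (i : ℕ) + 1 = (j : ℕ) then b i
    else if (j : ℕ) + 1 = (i : ℕ) then c i
    else 0

/-!
On an eigenbasis of `As`, the Askey–Wilson relation that is linear in `A` is a condition on single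
matrix entries of `A`. Conditions (iii) and (v) are what this condition says on the off-diagonal
and diagonal entries of a tridiagonal `A`. Applied to the vectors `As ^ n v0`, the relation
together with (iv) and (vi) shows by induction that `A` is triangular, with diagonal `θ 0, …, θ d`,
on the flag of Krylov spaces `span {v0, As v0, …, As ^ (n - 1) v0}`. The flag is full because no
proper nonzero subspace containing an eigenvector of `A` is invariant under both maps. Hence `A`
has an eigenbasis adapted to the flag, and the matrix of `As` on it is Hessenberg with nonzero
subdiagonal. Finally, a diagonal rescaling of the irreducible tridiagonal matrix of `A` provides a
nondegenerate bilinear form for which `A` and `As` are both self-adjoint; the eigenbasis of `A` is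
orthogonal for it, so the zero pattern of the Hessenberg matrix is symmetric, which makes that
matrix irreducible tridiagonal.
-/

section Eigenbasis

variable {ι : Type*} {b : Module.Basis ι F V} {T : Module.End F V} {μ : ι → F}

theorem toMatrix_eq_diagonal [Fintype ι] [DecidableEq ι] (hT : ∀ i, T (b i) = μ i • b i) :
    LinearMap.toMatrix b b T = Matrix.diagonal μ := by
  ext i j
  rcases eq_or_ne i j with rfl | hij
  · simp [LinearMap.toMatrix_apply, hT]
  · simp [LinearMap.toMatrix_apply, hT, hij]

theorem repr_aeval_apply (hT : ∀ i, T (b i) = μ i • b i) (p : Polynomial F) (w : V) (i : ι) :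
    b.repr (Polynomial.aeval T p w) i = p.eval (μ i) * b.repr w i := by
  have hcoord : b.coord i ∘ₗ Polynomial.aeval T p = p.eval (μ i) • b.coord i := by
    refine b.ext fun j => ?_
    rcases eq_or_ne j i with rfl | hji
    · simp [Module.End.aeval_apply_of_mem_apply_eq_smul (hT j)]
    · simp [Module.End.aeval_apply_of_mem_apply_eq_smul (hT j), hji]
  exact LinearMap.congr_fun hcoord w

theorem apply_basis_eq_sum [Fintype ι] [DecidableEq ι] (b : Module.Basis ι F V)
    (T : Module.End F V) (j : ι) : T (b j) = ∑ i, LinearMap.toMatrix b b T i j • b i := by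
  simpa only [LinearMap.toMatrix_apply] using (b.sum_repr (T (b j))).symm

end Eigenbasis

section BasisProj

variable {ι : Type*} (b : Module.Basis ι F V)

/-- The rank-one projection onto the line spanned by `b i` along the other basis vectors. When `b`
is an eigenbasis of a multiplicity-free map, these are its primitive idempotents. -/
noncomputable def basisProj (i : ι) : Module.End F V :=
  (b.coord i).smulRight (b i)

theorem basisProj_apply (i : ι) (w : V) : basisProj b i w = b.repr w i • b i := rfl

theorem basisProj_apply_basis [DecidableEq ι] (i j : ι) :
    basisProj b i (b j) = if i = j then b j else 0 := by
  rcases eq_or_ne i j with rfl | hij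
  · simp [basisProj_apply]
  · simp [basisProj_apply, hij]

theorem basisProj_mul_basisProj [DecidableEq ι] (i j : ι) :
    basisProj b i * basisProj b j = if i = j then basisProj b i else 0 := by
  refine b.ext fun k => ?_
  rcases eq_or_ne i j with rfl | hij
  · simp [basisProj_apply]
  · simp [basisProj_apply, hij]

theorem finrank_range_basisProj (i : ι) :
    Module.finrank F (LinearMap.range (basisProj b i)) = 1 := by
  have hcoord : b.coord i ≠ 0 := fun h => by simpa using LinearMap.congr_fun h (b i)
  rw [basisProj, LinearMap.range_smulRight_apply hcoord, finrank_span_singleton (b.ne_zero i)]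

variable [Fintype ι]

theorem sum_basisProj : ∑ i, basisProj b i = 1 := by
  ext w
  simp [basisProj_apply, b.sum_repr]

theorem sum_smul_basisProj_apply_basis (μ : ι → F) (j : ι) :
    (∑ i, μ i • basisProj b i) (b j) = μ j • b j := by
  classical simp [basisProj_apply_basis]

variable [DecidableEq ι] (T : Module.End F V)

theorem trace_basisProj_mul (i : ι) :
    LinearMap.trace F V (basisProj b i * T) = LinearMap.toMatrix b b T i i := by
  have := Module.Finite.of_basis b
  rw [show basisProj b i * T = (b.coord i ∘ₗ T).smulRight (b i) from rfl,
    LinearMap.trace_smulRight, LinearMap.toMatrix_apply]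
  rfl

theorem basisProj_mul_mul_basisProj_eq_zero_iff (i j : ι) :
    basisProj b i * T * basisProj b j = 0 ↔ LinearMap.toMatrix b b T i j = 0 := by
  have happly : ∀ w, (basisProj b i * T * basisProj b j) w =
      (b.repr w j * LinearMap.toMatrix b b T i j) • b i := fun w => by
    simp [basisProj_apply, LinearMap.toMatrix_apply, smul_smul]
  refine ⟨fun h => ?_, fun h => LinearMap.ext fun w => by simp [happly, h]⟩
  have hbj := happly (b j)
  simp only [h, b.repr_self, Finsupp.single_eq_same, one_mul, LinearMap.zero_apply] at hbj
  exact (smul_eq_zero.mp hbj.symm).resolve_right (b.ne_zero i)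

end BasisProj

section IdempotentSystems

theorem exists_basis_of_orthogonalIdempotents {ι : Type*} [Fintype ι] [Nonempty ι]
    {E : ι → Module.End F V} (hE : OrthogonalIdempotents E) (hE0 : ∀ i, E i ≠ 0)
    (hcard : Fintype.card ι = Module.finrank F V) : ∃ b : Module.Basis ι F V, E = basisProj b := by
  classical
  have hex : ∀ i, ∃ x, x ≠ 0 ∧ E i x = x := fun i => by
    obtain ⟨w, hw⟩ := DFunLike.ne_iff.mp (hE0 i)
    exact ⟨E i w, hw, LinearMap.congr_fun (hE.idem i) w⟩
  choose x hx0 hfix using hex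
  have hEx : ∀ i j, E i (x j) = if i = j then x j else 0 := fun i j => by
    conv_lhs => rw [← hfix j, ← Module.End.mul_apply, hE.mul_eq]
    split_ifs with hij
    · rw [hij, hfix]
    · rfl
  have hli : LinearIndependent F x := by
    refine Fintype.linearIndependent_iff.mpr fun g hg i => ?_
    simpa [hEx, hx0 i] using congrArg (E i) hg
  let b := basisOfLinearIndependentOfCardEqFinrank hli hcard
  have hb : ∀ i, b i = x i := fun i => by simp [b]
  exact ⟨b, funext fun i => b.ext fun j => by rw [basisProj_apply_basis, hb, hEx]⟩

variable {d : ℕ}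

theorem MOISys.exists_eq_basisProj {E : Fin (d + 1) → Module.End F V} (hE : MOISys d E)
    (hdim : Module.finrank F V = d + 1) :
    ∃ b : Module.Basis (Fin (d + 1)) F V, E = basisProj b := by
  refine exists_basis_of_orthogonalIdempotents
    ⟨fun i => (hE.1 i i).trans (if_pos rfl), fun i j hij => (hE.1 i j).trans (if_neg hij)⟩
    (fun i h => ?_) (by simp [hdim])
  have hrank := hE.2 i
  rw [h, LinearMap.range_zero, finrank_bot] at hrank
  exact zero_ne_one hrank

variable {b : Module.Basis (Fin (d + 1)) F V} {T : Module.End F V}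

theorem idempSysOf_basisProj {μ : Fin (d + 1) → F} (hμ : Function.Injective μ)
    (hT : ∀ i, T (b i) = μ i • b i) : IdempSysOf d T μ (basisProj b) := by
  refine ⟨⟨basisProj_mul_basisProj b, finrank_range_basisProj b⟩, sum_basisProj b, hμ,
    fun i => LinearMap.ext fun w => ?_⟩
  simp [basisProj_apply, hT, smul_comm (μ i)]

theorem isIrredTridiag_toMatrix_iff :
    IsIrredTridiag (LinearMap.toMatrix b b T) ↔
      (∀ i j : Fin (d + 1), ((i : ℕ) + 1 < j ∨ (j : ℕ) + 1 < i) →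
        basisProj b i * T * basisProj b j = 0) ∧
      ∀ i j : Fin (d + 1), ((i : ℕ) + 1 = j ∨ (j : ℕ) + 1 = i) →
        basisProj b i * T * basisProj b j ≠ 0 := by
  simp only [IsIrredTridiag, ne_eq, basisProj_mul_mul_basisProj_eq_zero_iff]

end IdempotentSystems

section IrreducibleTridiagonal

variable {d : ℕ} {b : Module.Basis (Fin (d + 1)) F V} {T : Module.End F V}

theorem IsIrredTridiag.eq_zero_of_repr_zero_eq_zero
    (hT : IsIrredTridiag (LinearMap.toMatrix b b T)) {u : V} {c : F} (hu : T u = c • u)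
    (h0 : b.repr u 0 = 0) : u = 0 := by
  refine b.ext_elem fun k => ?_
  rw [map_zero, Finsupp.zero_apply]
  induction k using WellFoundedLT.induction with
  | ind k ih =>
    cases k using Fin.cases with
    | zero => exact h0
    | succ m =>
      have hrow := congrFun (LinearMap.toMatrix_mulVec_repr b b T u) m.castSucc
      rw [hu, map_smul, Finsupp.smul_apply, ih _ m.castSucc_lt_succ, smul_zero, Matrix.mulVec,
        dotProduct, Fintype.sum_eq_single m.succ] at hrow
      · exact (mul_eq_zero.mp hrow).resolve_left (hT.2 _ _ (Or.inl (by simp)))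
      · intro j hj
        rcases lt_or_gt_of_ne hj with hlt | hgt
        · rw [ih j hlt, mul_zero]
        · rw [hT.1 _ _ (Or.inl (by simpa [Fin.lt_def] using hgt)), zero_mul]

theorem IsIrredTridiag.eq_top_of_le_comap (hT : IsIrredTridiag (LinearMap.toMatrix b b T))
    {W : Submodule F V} (hW : W ≤ W.comap T) (h0 : b 0 ∈ W) : W = ⊤ := by
  suffices hmem : ∀ k, b k ∈ W by
    rw [eq_top_iff, ← b.span_eq, Submodule.span_le]
    exact Set.range_subset_iff.mpr hmem
  intro k
  induction k using WellFoundedLT.induction with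
  | ind k ih =>
    cases k using Fin.cases with
    | zero => exact h0
    | succ m =>
      have hcol := hW (ih _ m.castSucc_lt_succ)
      rw [Submodule.mem_comap, apply_basis_eq_sum,
        ← Finset.add_sum_erase _ _ (Finset.mem_univ m.succ), W.add_mem_iff_left] at hcol
      · exact (W.smul_mem_iff (hT.2 _ _ (Or.inr (by simp)))).mp hcol
      · refine W.sum_mem fun i hi => ?_
        rcases lt_or_gt_of_ne (Finset.ne_of_mem_erase hi) with hlt | hgt
        · exact W.smul_mem _ (ih i hlt)
        · rw [hT.1 _ _ (Or.inr (by simpa [Fin.lt_def] using hgt)), zero_smul]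
          exact W.zero_mem

theorem IsIrredTridiag.injective_of_eigenvectors
    (hT : IsIrredTridiag (LinearMap.toMatrix b b T)) {ι : Type*} {x : ι → V} {μ : ι → F}
    (hx : LinearIndependent F x) (hTx : ∀ i, T (x i) = μ i • x i) : Function.Injective μ := by
  intro i j hμ
  by_contra hij
  have hcomb : b.repr (x j) 0 • x i + -b.repr (x i) 0 • x j = 0 :=
    hT.eq_zero_of_repr_zero_eq_zero (c := μ i)
      (by simp only [map_add, map_smul, hTx, hμ]; module) (by simp [mul_comm])
  have hrepr := ((LinearIndepOn.pair_iff x hij).mp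
    (hx.linearIndepOn_univ.mono (Set.subset_univ _)) _ _ hcomb).1
  exact hx.ne_zero j (hT.eq_zero_of_repr_zero_eq_zero (hTx j) hrepr)

/- The polynomial `∏ i ≠ 0, (X - μ i)` in `S` maps the given eigenvector, whose zeroth coordinate is
nonzero, to a nonzero multiple of `b 0`. -/
theorem IsIrredTridiag.eq_top_of_eigenvector_mem (hT : IsIrredTridiag (LinearMap.toMatrix b b T))
    {S : Module.End F V} {μ : Fin (d + 1) → F} (hS : ∀ i, S (b i) = μ i • b i)
    (hμ : ∀ i ≠ 0, μ i ≠ μ 0) {W : Submodule F V} (hWT : W ≤ W.comap T) (hWS : W ≤ W.comap S)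
    {v : V} {c : F} (hv : v ≠ 0) (hTv : T v = c • v) (hvW : v ∈ W) : W = ⊤ := by
  refine hT.eq_top_of_le_comap hWT ?_
  let p : Polynomial F := Lagrange.nodal (Finset.univ.erase 0) μ
  have hp0 : p.eval (μ 0) ≠ 0 :=
    Lagrange.eval_nodal_not_at_node fun i hi => (hμ i (Finset.ne_of_mem_erase hi)).symm
  have hpi : ∀ i ≠ 0, p.eval (μ i) = 0 := fun i hi =>
    Lagrange.eval_nodal_at_node (Finset.mem_erase.mpr ⟨hi, Finset.mem_univ i⟩)
  have hpv : Polynomial.aeval S p v = (p.eval (μ 0) * b.repr v 0) • b 0 := by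
    refine b.ext_elem fun i => ?_
    rcases eq_or_ne i 0 with rfl | hi
    · simp [repr_aeval_apply hS]
    · simp [repr_aeval_apply hS, hpi i hi, hi.symm]
  have hmem := Polynomial.aeval_apply_smul_mem_of_le_comap hvW p S hWS
  rw [hpv] at hmem
  have hv0 : b.repr v 0 ≠ 0 := fun h => hv (hT.eq_zero_of_repr_zero_eq_zero hTv h)
  exact (W.smul_mem_iff (mul_ne_zero hp0 hv0)).mp hmem

end IrreducibleTridiagonal

section TriangularOnFlag

/-- `T` preserves the first `N` steps of the flag `W 0 = ⊥ ≤ W 1 ≤ ⋯` and acts on the quotient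
`W (n + 1) / W n` as the scalar `θ n`: upper triangularity of `T` with diagonal `θ`, stated without
choosing a basis adapted to the flag. -/
structure IsTriangularOn (T : Module.End F V) (θ : ℕ → F) (W : ℕ → Submodule F V) (N : ℕ) :
    Prop where
  bot : W 0 = ⊥
  mono : Monotone W
  sub_smul_mem : ∀ n < N, ∀ w ∈ W (n + 1), T w - θ n • w ∈ W n

namespace IsTriangularOn

variable {T : Module.End F V} {θ : ℕ → F} {W : ℕ → Submodule F V} {N n : ℕ}

theorem le_comap (h : IsTriangularOn T θ W N) (hn : n ≤ N) : W n ≤ (W n).comap T := by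
  rcases n with - | m
  · simp [h.bot]
  · intro w hw
    simpa using (W (m + 1)).add_mem (h.mono m.le_succ (h.sub_smul_mem m hn w hw))
      ((W (m + 1)).smul_mem (θ m) hw)

theorem aeval_nodal_apply_eq_zero (h : IsTriangularOn T θ W N) (hn : n ≤ N) :
    ∀ w ∈ W n, Polynomial.aeval T (Lagrange.nodal (Finset.range n) θ) w = 0 := by
  induction n with
  | zero => simp [h.bot]
  | succ m ih =>
    intro w hw
    rw [Finset.range_add_one, Lagrange.nodal_insert_eq_nodal Finset.notMem_range_self, mul_comm,
      map_mul, Module.End.mul_apply]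
    exact ih (Nat.le_of_succ_le hn) _ (by simpa using h.sub_smul_mem m hn w hw)

theorem aeval_apply_sub_smul_mem (h : IsTriangularOn T θ W N) (hn : n < N) (p : Polynomial F)
    {w : V} (hw : w ∈ W (n + 1)) : Polynomial.aeval T p w - p.eval (θ n) • w ∈ W n := by
  obtain ⟨q, hq⟩ := Polynomial.X_sub_C_dvd_sub_C_eval (p := p) (a := θ n)
  have hpq : Polynomial.aeval T p w - p.eval (θ n) • w =
      Polynomial.aeval T q (T w - θ n • w) := by
    have := LinearMap.congr_fun (congrArg (Polynomial.aeval T) (hq.trans (mul_comm _ _))) w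
    simpa using this
  rw [hpq]
  exact Polynomial.aeval_apply_smul_mem_of_le_comap (h.sub_smul_mem n hn w hw) q T
    (h.le_comap hn.le)

theorem exists_eigenvector (h : IsTriangularOn T θ W N) (hθ : Set.InjOn θ (Set.Iio N))
    (hn : n < N) (hlt : W n < W (n + 1)) : ∃ v ∈ W (n + 1), v ∉ W n ∧ T v = θ n • v := by
  obtain ⟨f, hf, hfn⟩ := SetLike.exists_of_lt hlt
  let p := Lagrange.nodal (Finset.range n) θ
  have hp : p.eval (θ n) ≠ 0 := Lagrange.eval_nodal_not_at_node fun i hi hni =>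
    (Finset.mem_range.mp hi).ne' (hθ hn ((Finset.mem_range.mp hi).trans hn) hni)
  have hpf := h.aeval_apply_sub_smul_mem hn p hf
  refine ⟨Polynomial.aeval T p f, Polynomial.aeval_apply_smul_mem_of_le_comap hf p T
    (h.le_comap hn), fun hmem => hfn ?_, ?_⟩
  · exact ((W n).smul_mem_iff hp).mp (((W n).sub_mem_iff_right hmem).mp hpf)
  · have hcomm : Polynomial.aeval T p (T f) = T (Polynomial.aeval T p f) := by
      simpa using LinearMap.congr_fun (Polynomial.aeval_mul T (p := p) (q := Polynomial.X)
        |>.symm.trans (congrArg _ (mul_comm p Polynomial.X))) f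
    have hkill := h.aeval_nodal_apply_eq_zero hn.le _ (h.sub_smul_mem n hn f hf)
    rwa [map_sub, map_smul, hcomm, sub_eq_zero] at hkill

theorem exists_eigenbasis [NeZero N] (h : IsTriangularOn T θ W N)
    (hN : Module.finrank F V = N) (hθ : Set.InjOn θ (Set.Iio N))
    (hlt : ∀ n < N, W n < W (n + 1)) :
    ∃ b : Module.Basis (Fin N) F V,
      ∀ i : Fin N, b i ∈ W (i + 1) ∧ b i ∉ W i ∧ T (b i) = θ i • b i := by
  choose x hmem hnot heig using fun i : Fin N => h.exists_eigenvector hθ i.2 (hlt i i.2)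
  have hli : LinearIndependent F x := by
    refine T.eigenvectors_linearIndependent' (fun i : Fin N => θ i)
      (fun i j hij => Fin.ext (hθ i.2 j.2 hij)) x fun i => ?_
    exact Module.End.hasEigenvector_iff.mpr
      ⟨Module.End.mem_eigenspace_iff.mpr (heig i), fun h0 => hnot i (h0 ▸ (W i).zero_mem)⟩
  let b := basisOfLinearIndependentOfCardEqFinrank hli (by simp [hN])
  have hb : ∀ i, b i = x i := fun i => by simp [b]
  exact ⟨b, fun i => by rw [hb]; exact ⟨hmem i, hnot i, heig i⟩⟩

theorem mem_iff_repr_eq_zero (h : IsTriangularOn T θ W N) (hθ : Set.InjOn θ (Set.Iio N))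
    {b : Module.Basis (Fin N) F V} (hb : ∀ i : Fin N, b i ∈ W (i + 1))
    (hT : ∀ i, T (b i) = θ i • b i) (hn : n ≤ N) {w : V} :
    w ∈ W n ↔ ∀ i : Fin N, n ≤ i → b.repr w i = 0 := by
  constructor
  · intro hw i hi
    have hne : (Lagrange.nodal (Finset.range n) θ).eval (θ i) ≠ 0 :=
      Lagrange.eval_nodal_not_at_node fun j hj hij => by
        have hjn := Finset.mem_range.mp hj
        exact (hjn.trans_le hi).ne' (hθ i.2 (hjn.trans_le hn) hij)
    have hzero := repr_aeval_apply hT (Lagrange.nodal (Finset.range n) θ) w i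
    rw [h.aeval_nodal_apply_eq_zero hn w hw, map_zero, Finsupp.zero_apply] at hzero
    exact (mul_eq_zero.mp hzero.symm).resolve_left hne
  · intro hw
    rw [← b.sum_repr w]
    refine (W n).sum_mem fun i _ => ?_
    rcases lt_or_ge (i : ℕ) n with hi | hi
    · exact (W n).smul_mem _ (h.mono hi (hb i))
    · rw [hw i hi, zero_smul]
      exact (W n).zero_mem

end IsTriangularOn

end TriangularOnFlag

section Krylov

/-- The Krylov subspace spanned by `v, T v, …, T ^ (n - 1) v`. -/
def krylov (T : Module.End F V) (v : V) (n : ℕ) : Submodule F V :=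
  Submodule.span F ((fun i => (T ^ i) v) '' Set.Iio n)

variable (T : Module.End F V) (v : V)

theorem krylov_zero : krylov T v 0 = ⊥ := by
  simp [krylov]

theorem krylov_mono : Monotone (krylov T v) := fun _ _ h =>
  Submodule.span_mono (Set.image_mono (Set.Iio_subset_Iio h))

theorem pow_apply_mem_krylov {m n : ℕ} (h : m < n) : (T ^ m) v ∈ krylov T v n :=
  Submodule.subset_span ⟨m, h, rfl⟩

theorem krylov_succ (n : ℕ) :
    krylov T v (n + 1) =
      Submodule.span F (insert ((T ^ n) v) ((fun i => (T ^ i) v) '' Set.Iio n)) := by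
  rw [krylov, ← Order.succ_eq_add_one, Order.Iio_succ_eq_insert, Set.image_insert_eq]

theorem mem_krylov_succ {n : ℕ} {w : V} :
    w ∈ krylov T v (n + 1) ↔ ∃ c : F, ∃ y ∈ krylov T v n, w = c • (T ^ n) v + y := by
  rw [krylov_succ, Submodule.mem_span_insert, krylov]

theorem krylov_le_comap_krylov_succ (n : ℕ) :
    krylov T v n ≤ (krylov T v (n + 1)).comap T := by
  rw [krylov, Submodule.span_le]
  rintro _ ⟨i, hi, rfl⟩
  rw [SetLike.mem_coe, Submodule.mem_comap, ← Module.End.mul_apply, ← pow_succ']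
  exact pow_apply_mem_krylov T v (Nat.succ_lt_succ hi)

theorem finrank_krylov_le (n : ℕ) : Module.finrank F (krylov T v n) ≤ n := by
  classical
  refine (finrank_span_le_card _).trans ?_
  rw [Set.toFinset_image]
  exact Finset.card_image_le.trans_eq (by simp)

variable {T v} {n : ℕ}

theorem krylov_le_comap_of_pow_apply_mem (h : (T ^ n) v ∈ krylov T v n) :
    krylov T v n ≤ (krylov T v n).comap T := by
  have hsucc : krylov T v (n + 1) = krylov T v n := by
    rw [krylov_succ, Submodule.span_insert_eq_span h, krylov]
  simpa only [hsucc] using krylov_le_comap_krylov_succ T v n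

theorem apply_notMem_krylov_succ (h : (T ^ (n + 1)) v ∉ krylov T v (n + 1)) {w : V}
    (hw : w ∈ krylov T v (n + 1)) (hwn : w ∉ krylov T v n) : T w ∉ krylov T v (n + 1) := by
  obtain ⟨c, y, hy, rfl⟩ := (mem_krylov_succ T v).mp hw
  have hc : c ≠ 0 := by
    rintro rfl
    exact hwn (by simpa using hy)
  have hTy : T y ∈ krylov T v (n + 1) := krylov_le_comap_krylov_succ T v n hy
  rwa [map_add, map_smul, ← Module.End.mul_apply, ← pow_succ', Submodule.add_mem_iff_left _ hTy,
    Submodule.smul_mem_iff _ hc]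

theorem isTriangularOn_krylov {A : Module.End F V} {θ : ℕ → F} {N : ℕ}
    (h : ∀ n < N, A ((T ^ n) v) - θ n • (T ^ n) v ∈ krylov T v n) :
    IsTriangularOn A θ (krylov T v) N := by
  have hinv : ∀ n ≤ N, krylov T v n ≤ (krylov T v n).comap A := by
    intro n hn
    refine Submodule.span_le.mpr ?_
    rintro _ ⟨i, hi, rfl⟩
    exact ((krylov T v n).sub_mem_iff_left
      ((krylov T v n).smul_mem (θ i) (pow_apply_mem_krylov T v hi))).mp
      (krylov_mono T v (Set.mem_Iio.mp hi).le (h i (hi.trans_le hn)))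
  refine ⟨krylov_zero T v, krylov_mono T v, fun n hn w hw => ?_⟩
  obtain ⟨c, y, hy, rfl⟩ := (mem_krylov_succ T v).mp hw
  have hsplit : A (c • (T ^ n) v + y) - θ n • (c • (T ^ n) v + y) =
      c • (A ((T ^ n) v) - θ n • (T ^ n) v) + (A y - θ n • y) := by
    simp only [map_add, map_smul]
    module
  rw [hsplit]
  exact Submodule.add_mem _ (Submodule.smul_mem _ _ (h n hn))
    (Submodule.sub_mem _ (hinv n hn.le hy) (Submodule.smul_mem _ _ hy))

theorem IsTriangularOn.exists_hessenberg_eigenbasis {A : Module.End F V} {θ : ℕ → F} {N : ℕ}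
    [NeZero N] (h : IsTriangularOn A θ (krylov T v) N) (hN : Module.finrank F V = N)
    (hθ : Set.InjOn θ (Set.Iio N)) (hpow : ∀ n < N, (T ^ n) v ∉ krylov T v n) :
    ∃ b : Module.Basis (Fin N) F V, (∀ i : Fin N, A (b i) = θ i • b i) ∧
      (∀ i j : Fin N, (j : ℕ) + 1 < i → LinearMap.toMatrix b b T i j = 0) ∧
      ∀ i j : Fin N, (j : ℕ) + 1 = i → LinearMap.toMatrix b b T i j ≠ 0 := by
  obtain ⟨b, hb⟩ := h.exists_eigenbasis hN hθ fun n hn => SetLike.lt_iff_le_and_exists.mpr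
    ⟨h.mono n.le_succ, _, pow_apply_mem_krylov T v n.lt_succ_self, hpow n hn⟩
  have hmem : ∀ n ≤ N, ∀ w, w ∈ krylov T v n ↔ ∀ i : Fin N, n ≤ i → b.repr w i = 0 :=
    fun n hn w => h.mem_iff_repr_eq_zero hθ (fun i => (hb i).1) (fun i => (hb i).2.2) hn
  have hfar : ∀ i j : Fin N, (j : ℕ) + 1 < i → LinearMap.toMatrix b b T i j = 0 := by
    intro i j hij
    rw [LinearMap.toMatrix_apply]
    have hj : (j : ℕ) + 2 ≤ N := by lia
    exact (hmem _ hj _).mp (krylov_le_comap_krylov_succ T v _ (hb j).1) i hij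
  refine ⟨b, fun i => (hb i).2.2, hfar, fun i j hij h0 => ?_⟩
  have hj : (j : ℕ) + 1 < N := hij ▸ i.2
  refine apply_notMem_krylov_succ (hpow _ hj) (hb j).1 (hb j).2.1 ((hmem _ hj.le _).mpr ?_)
  intro k hk
  rw [← LinearMap.toMatrix_apply]
  rcases hk.eq_or_lt with heq | hlt
  · rwa [show k = i from Fin.ext (heq.symm.trans hij)]
  · exact hfar k j hlt

end Krylov

section AskeyWilson

/-- The Askey–Wilson polynomial `P(x, y)` without its constant term. It takes the same value at all
pairs of consecutive terms of a sequence satisfying `γs = x (n - 1) - β * x n + x (n + 1)`. -/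
def awPoly (β γs x y : F) : F :=
  x ^ 2 - β * x * y + y ^ 2 - γs * (x + y)

theorem awPoly_comm (β γs x y : F) : awPoly β γs x y = awPoly β γs y x := by
  rw [awPoly, awPoly]
  ring

theorem awPoly_eq_of_recurrence {β γs x y z : F} (h : γs = x - β * y + z) :
    awPoly β γs y x = awPoly β γs z y := by
  rw [awPoly, awPoly, h]
  ring

theorem awPoly_self_sub_of_recurrence {β γs x y z : F} (h : γs = x - β * y + z) :
    awPoly β γs y y - awPoly β γs y x = (y - x) * (y - z) := by
  rw [awPoly, awPoly, h]
  ring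

/-- The Askey–Wilson relation that is quadratic in `As` and linear in `A`. It lets `A` be computed
on the vectors `As ^ n v` recursively. -/
def AskeyWilsonRel (A As : Module.End F V) (β γs ρ γ ω ηs : F) : Prop :=
  As * As * A - β • (As * A * As) + A * As * As - γs • (A * As + As * A) - ρ • A =
    γ • (As * As) + ω • As + ηs • 1

theorem askeyWilsonRel_iff {ι : Type*} [Fintype ι] [DecidableEq ι] {e : Module.Basis ι F V}
    {A As : Module.End F V} {μ : ι → F} (hAs : ∀ i, As (e i) = μ i • e i) {β γs ρ γ ω ηs : F} :
    AskeyWilsonRel A As β γs ρ γ ω ηs ↔ ∀ i j,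
      LinearMap.toMatrix e e A i j * (awPoly β γs (μ i) (μ j) - ρ) =
        if i = j then γ * μ i ^ 2 + ω * μ i + ηs else 0 := by
  rw [AskeyWilsonRel, ← (LinearMap.toMatrix e e).injective.eq_iff, ← Matrix.ext_iff]
  refine forall₂_congr fun i j => ?_
  simp only [map_add, map_sub, map_smul, LinearMap.toMatrix_mul, toMatrix_eq_diagonal hAs,
    LinearMap.toMatrix_one, Matrix.diagonal_mul_diagonal, Matrix.add_apply, Matrix.sub_apply,
    Matrix.smul_apply, Matrix.mul_assoc, Matrix.diagonal_mul, Matrix.mul_diagonal, smul_eq_mul]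
  rcases eq_or_ne i j with rfl | hij
  · simp only [Matrix.diagonal_apply_eq, Matrix.one_apply_eq, if_true, awPoly]
    refine Eq.congr ?_ ?_ <;> ring
  · simp only [Matrix.diagonal_apply_ne _ hij, Matrix.one_apply_ne hij, if_neg hij, awPoly]
    refine Eq.congr ?_ ?_ <;> ring

theorem awPoly_eq_of_forall_recurrence {β γs : F} {x : ℤ → F} {N : ℕ}
    (h : ∀ n : ℕ, n < N → γs = x (n - 1) - β * x n + x (n + 1)) :
    ∀ n ≤ N, awPoly β γs (x n) (x (n - 1)) = awPoly β γs (x 0) (x (-1)) := by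
  intro n hn
  induction n with
  | zero => simp
  | succ m ih =>
    rw [← ih (Nat.le_of_succ_le hn), awPoly_eq_of_recurrence (h m hn)]
    simp

theorem askeyWilsonRel_of_tridiagonal {d : ℕ} {e : Module.Basis (Fin (d + 1)) F V}
    {A As : Module.End F V} {x : ℤ → F} {β γs γ ω ηs : F}
    (hA : ∀ i j : Fin (d + 1), ((i : ℕ) + 1 < j ∨ (j : ℕ) + 1 < i) →
      LinearMap.toMatrix e e A i j = 0)
    (hAs : ∀ i : Fin (d + 1), As (e i) = x (i : ℕ) • e i)
    (hx : ∀ n : ℕ, n < d + 1 → γs = x (n - 1) - β * x n + x (n + 1))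
    (hdiag : ∀ i : Fin (d + 1), LinearMap.toMatrix e e A i i *
      ((x (i : ℕ) - x ((i : ℕ) - 1)) * (x (i : ℕ) - x ((i : ℕ) + 1))) =
        γ * x (i : ℕ) ^ 2 + ω * x (i : ℕ) + ηs) :
    AskeyWilsonRel A As β γs (awPoly β γs (x 0) (x (-1))) γ ω ηs := by
  have hconst := awPoly_eq_of_forall_recurrence hx
  have hsucc : ∀ i j : Fin (d + 1), (i : ℕ) + 1 = j →
      awPoly β γs (x (j : ℕ)) (x (i : ℕ)) = awPoly β γs (x 0) (x (-1)) := fun i j hij => by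
    simpa [← hij] using hconst j j.2.le
  refine (askeyWilsonRel_iff hAs).mpr fun i j => ?_
  rcases eq_or_ne i j with rfl | hij
  · rw [if_pos rfl, ← hconst i i.2.le, awPoly_self_sub_of_recurrence (hx i i.2), hdiag]
  · rw [if_neg hij]
    rcases lt_trichotomy ((i : ℕ) + 1) j with hlt | heq | hgt
    · rw [hA i j (Or.inl hlt), zero_mul]
    · rw [awPoly_comm, hsucc i j heq, sub_self, mul_zero]
    · rcases (Nat.succ_le_of_lt (lt_of_le_of_ne (Nat.lt_succ_iff.mp hgt)
        (Fin.val_ne_of_ne hij.symm))).eq_or_lt with heq | hlt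
      · rw [hsucc j i heq, sub_self, mul_zero]
      · rw [hA i j (Or.inr hlt), zero_mul]

theorem apply_apply_sub_smul_mem_span {A T : Module.End F V} {v u : V} {r s t : F}
    (hv : A v = r • v) (hu : A u = s • u) (hT : T v - u = t • v) :
    A (T v) - s • T v ∈ Submodule.span F {v} := by
  refine Submodule.mem_span_singleton.mpr ⟨t * (r - s), ?_⟩
  rw [sub_eq_iff_eq_add.mp hT, map_add, map_smul, hv, hu]
  module

namespace AskeyWilsonRel

variable {A As : Module.End F V} {β γs ρ γ ω ηs : F}

theorem apply_sub_smul_eq (h : AskeyWilsonRel A As β γs ρ γ ω ηs) {r s t : F}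
    (hγ : r - β * s + t = γ) (w : V) :
    A (As (As w)) - t • As (As w) =
      β • As (A (As w) - s • As w) - As (As (A w - r • w)) + γs • (A (As w) + As (A w)) +
        ρ • A w + ω • As w + ηs • w := by
  have hw := LinearMap.congr_fun h w
  simp only [LinearMap.add_apply, LinearMap.sub_apply, LinearMap.smul_apply, Module.End.mul_apply,
    Module.End.one_apply] at hw
  subst hγ
  simp only [map_sub, map_smul]
  linear_combination (norm := module) hw

theorem apply_pow_sub_smul_mem_krylov (h : AskeyWilsonRel A As β γs ρ γ ω ηs) {θ : ℕ → F}
    {N : ℕ} (hθ : ∀ n, n + 2 < N → θ n - β * θ (n + 1) + θ (n + 2) = γ) {v : V}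
    (h0 : A v = θ 0 • v) (h1 : A (As v) - θ 1 • As v ∈ Submodule.span F {v}) :
    ∀ n < N, A ((As ^ n) v) - θ n • (As ^ n) v ∈ krylov As v n := by
  intro n
  induction n using Nat.twoStepInduction with
  | zero => simp [h0]
  | one => simpa [krylov] using fun _ => h1
  | more m ih0 ih1 =>
    intro hm
    set w := (As ^ m) v
    have hpow : ∀ k, (As ^ (k + 1)) v = As ((As ^ k) v) := fun k => by
      rw [pow_succ', Module.End.mul_apply]
    have hAs : ∀ n u, u ∈ krylov As v n → As u ∈ krylov As v (n + 1) :=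
      fun n _ hu => krylov_le_comap_krylov_succ As v n hu
    have hw : w ∈ krylov As v (m + 1) := pow_apply_mem_krylov As v m.lt_succ_self
    have hAw := ih0 (by lia)
    have hAAsw := ih1 (by lia)
    rw [hpow] at hAAsw
    have hAw' : A w ∈ krylov As v (m + 1) := (Submodule.sub_mem_iff_left _
      (Submodule.smul_mem _ _ hw)).mp (krylov_mono As v m.le_succ hAw)
    have hAAsw' : A (As w) ∈ krylov As v (m + 2) := (Submodule.sub_mem_iff_left _
      (Submodule.smul_mem _ _ (hAs _ _ hw))).mp (krylov_mono As v (m + 1).le_succ hAAsw)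
    rw [hpow, hpow, h.apply_sub_smul_eq (hθ m hm)]
    have hmono := krylov_mono As v (m + 1).le_succ
    refine add_mem (add_mem (add_mem (add_mem (sub_mem ?_ ?_) ?_) ?_) ?_) ?_
    · exact Submodule.smul_mem _ _ (hAs _ _ hAAsw)
    · exact hAs _ _ (hAs _ _ hAw)
    · exact Submodule.smul_mem _ _ (add_mem hAAsw' (hAs _ _ hAw'))
    · exact Submodule.smul_mem _ _ (hmono hAw')
    · exact Submodule.smul_mem _ _ (hAs _ _ hw)
    · exact Submodule.smul_mem _ _ (hmono hw)

end AskeyWilsonRel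

end AskeyWilson

section SelfAdjointForm

variable {d : ℕ}

theorem IsIrredTridiag.exists_diagonal_symmetrizer {M : Matrix (Fin (d + 1)) (Fin (d + 1)) F}
    (hM : IsIrredTridiag M) :
    ∃ D : Fin (d + 1) → F, (∀ i, D i ≠ 0) ∧ ∀ i j, D i * M i j = D j * M j i := by
  have hsup : ∀ i : Fin d, M i.castSucc i.succ ≠ 0 := fun i => hM.2 _ _ (Or.inl (by simp))
  have hsub : ∀ i : Fin d, M i.succ i.castSucc ≠ 0 := fun i => hM.2 _ _ (Or.inr (by simp))
  let D : Fin (d + 1) → F :=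
    Fin.induction 1 fun i Di => Di * M i.castSucc i.succ / M i.succ i.castSucc
  have hD : ∀ i : Fin d, D i.succ = D i.castSucc * M i.castSucc i.succ / M i.succ i.castSucc :=
    fun i => Fin.induction_succ ..
  refine ⟨D, fun i => ?_, fun i j => ?_⟩
  · induction i using Fin.induction with
    | zero => exact one_ne_zero
    | succ i ih => rw [hD]; exact div_ne_zero (mul_ne_zero ih (hsup i)) (hsub i)
  · wlog hij : i ≤ j generalizing i j
    · exact (this j i (le_of_not_ge hij)).symm
    rcases hij.eq_or_lt with rfl | hlt
    · rfl
    rcases (Nat.succ_le_of_lt hlt).eq_or_lt with heq | hfar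
    · obtain ⟨k, rfl⟩ := Fin.exists_succ_eq.mpr (Fin.ne_zero_of_lt hlt)
      obtain rfl : i = k.castSucc := Fin.ext (by simpa using heq)
      rw [hD, div_mul_cancel₀ _ (hsub k)]
    · rw [hM.1 i j (Or.inl hfar), hM.1 j i (Or.inr hfar), mul_zero, mul_zero]

theorem IsIrredTridiag.exists_separatingLeft_isSelfAdjoint
    {e : Module.Basis (Fin (d + 1)) F V} {A As : Module.End F V} {μ : Fin (d + 1) → F}
    (hA : IsIrredTridiag (LinearMap.toMatrix e e A)) (hAs : ∀ i, As (e i) = μ i • e i) :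
    ∃ B : LinearMap.BilinForm F V, B.SeparatingLeft ∧ B.IsSelfAdjoint A ∧ B.IsSelfAdjoint As := by
  obtain ⟨D, hD0, hD⟩ := hA.exists_diagonal_symmetrizer
  have hself : ∀ T : Module.End F V,
      (∀ i j, D i * LinearMap.toMatrix e e T i j = D j * LinearMap.toMatrix e e T j i) →
      (Matrix.toLinearMap₂ e e (Matrix.diagonal D)).IsSelfAdjoint T := fun T hT => by
    rw [LinearMap.IsSelfAdjoint, ← Matrix.toLin_toMatrix e e T, isAdjointPair_toLinearMap₂,
      Matrix.IsAdjointPair]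
    ext i j
    simp [mul_comm, hT]
  refine ⟨Matrix.toLinearMap₂ e e (Matrix.diagonal D), ?_, hself A hD, hself As fun i j => ?_⟩
  · rw [Matrix.separatingLeft_toLinearMap₂_iff, Matrix.separatingLeft_iff_det_ne_zero,
      Matrix.det_diagonal]
    exact Finset.prod_ne_zero_iff.mpr fun i _ => hD0 i
  · rw [toMatrix_eq_diagonal hAs]
    rcases eq_or_ne i j with rfl | hij
    · rfl
    · simp [hij, hij.symm]

variable {ι : Type*} {B : LinearMap.BilinForm F V} {b : Module.Basis ι F V}
  {T S : Module.End F V} {μ : ι → F}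

theorem isOrthoᵢ_of_isSelfAdjoint (hB : B.IsSelfAdjoint T) (hμ : Function.Injective μ)
    (hT : ∀ i, T (b i) = μ i • b i) : B.IsOrthoᵢ b := by
  refine LinearMap.isOrthoᵢ_def.mpr fun i j hij => ?_
  have hadj : μ i * B (b i) (b j) = μ j * B (b i) (b j) := by
    simpa [hT] using hB (b i) (b j)
  by_contra h0
  exact hij (hμ (mul_right_cancel₀ h0 hadj))

theorem toMatrix_eq_zero_comm_of_isSelfAdjoint [Fintype ι] [DecidableEq ι] (hB : B.SeparatingLeft)
    (hortho : B.IsOrthoᵢ b) (hS : B.IsSelfAdjoint S) (i j : ι) :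
    LinearMap.toMatrix b b S i j = 0 ↔ LinearMap.toMatrix b b S j i = 0 := by
  have hne := hortho.not_isOrtho_basis_self_of_separatingLeft hB
  have hentry : LinearMap.toMatrix b b S i j * B (b i) (b i) =
      LinearMap.toMatrix b b S j i * B (b j) (b j) := by
    have hadj := hS (b j) (b i)
    rw [apply_basis_eq_sum b S j, apply_basis_eq_sum b S i, map_sum, map_sum, LinearMap.sum_apply,
      Fintype.sum_eq_single i, Fintype.sum_eq_single j] at hadj
    · simpa using hadj
    · intro k hk
      simp [LinearMap.isOrthoᵢ_def.mp hortho j k hk.symm]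
    · intro k hk
      simp [LinearMap.isOrthoᵢ_def.mp hortho k i hk]
  rw [← mul_eq_zero_iff_right (hne i), hentry, mul_eq_zero_iff_right (hne j)]

end SelfAdjointForm

section LeonardPairs

variable {d : ℕ}

theorem isIrredTridiag_of_hessenberg {M : Matrix (Fin (d + 1)) (Fin (d + 1)) F}
    (hcomm : ∀ i j, M i j = 0 ↔ M j i = 0)
    (hfar : ∀ i j : Fin (d + 1), (j : ℕ) + 1 < i → M i j = 0)
    (hnear : ∀ i j : Fin (d + 1), (j : ℕ) + 1 = i → M i j ≠ 0) : IsIrredTridiag M :=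
  ⟨fun i j h => h.elim (fun hij => (hcomm i j).mpr (hfar j i hij)) (hfar i j),
    fun i j h => h.elim (fun hij => (hcomm i j).not.mpr (hnear j i hij)) (hnear i j)⟩

variable {e b : Module.Basis (Fin (d + 1)) F V} {A As : Module.End F V}
  {μ : Fin (d + 1) → F} {θ : ℕ → F} {v : V}

/- Otherwise `krylov As v n` is a proper subspace invariant under both maps and containing the
eigenvector `v` of `A`. -/
theorem IsIrredTridiag.pow_apply_notMem_krylov (hA : IsIrredTridiag (LinearMap.toMatrix e e A))
    (hAs : ∀ i, As (e i) = μ i • e i) (hμ : ∀ i ≠ 0, μ i ≠ μ 0) (hv : v ≠ 0)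
    (hflag : IsTriangularOn A θ (krylov As v) (d + 1)) {n : ℕ} (hn : n < d + 1) :
    (As ^ n) v ∉ krylov As v n := by
  have := Module.Finite.of_basis e
  intro hmem
  rcases n with - | m
  · exact hv (by simpa [krylov_zero] using hmem)
  have hv1 : A v = θ 0 • v := by
    have := hflag.sub_smul_mem 0 d.succ_pos v (pow_apply_mem_krylov As v one_pos)
    rwa [hflag.bot, Submodule.mem_bot, sub_eq_zero] at this
  have htop := hA.eq_top_of_eigenvector_mem hAs hμ (hflag.le_comap hn.le)
    (krylov_le_comap_of_pow_apply_mem hmem) hv hv1 (pow_apply_mem_krylov As v m.succ_pos)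
  have hrank := finrank_krylov_le As v (m + 1)
  rw [htop, finrank_top, Module.finrank_eq_card_basis e, Fintype.card_fin] at hrank
  exact hn.not_ge hrank

theorem IsIrredTridiag.exists_eigenbasis_isIrredTridiag
    (hA : IsIrredTridiag (LinearMap.toMatrix e e A)) (hAs : ∀ i, As (e i) = μ i • e i)
    (hμ : ∀ i ≠ 0, μ i ≠ μ 0) (hv : v ≠ 0) (hθ : Set.InjOn θ (Set.Iio (d + 1)))
    (hflag : IsTriangularOn A θ (krylov As v) (d + 1)) :
    ∃ b : Module.Basis (Fin (d + 1)) F V, (∀ i : Fin (d + 1), A (b i) = θ i • b i) ∧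
      IsIrredTridiag (LinearMap.toMatrix b b As) := by
  obtain ⟨b, hAb, hfar, hnear⟩ := hflag.exists_hessenberg_eigenbasis
    (by simp [Module.finrank_eq_card_basis e]) hθ
    fun n hn => hA.pow_apply_notMem_krylov hAs hμ hv hflag hn
  obtain ⟨B, hB, hBA, hBAs⟩ := hA.exists_separatingLeft_isSelfAdjoint hAs
  have hortho := isOrthoᵢ_of_isSelfAdjoint hBA
    (fun i j hij => Fin.ext (hθ i.2 j.2 hij)) hAb
  exact ⟨b, hAb, isIrredTridiag_of_hessenberg
    (toMatrix_eq_zero_comm_of_isSelfAdjoint hB hortho hBAs) hfar hnear⟩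

variable {θ : Fin (d + 1) → F}

theorem isLeonardPair_of_eigenbases (hAb : ∀ i, A (b i) = θ i • b i)
    (hAse : ∀ i, As (e i) = μ i • e i) (hA : IsIrredTridiag (LinearMap.toMatrix e e A))
    (hAs : IsIrredTridiag (LinearMap.toMatrix b b As)) : IsLeonardPair d A As :=
  ⟨⟨e, hA, toMatrix_eq_diagonal hAse ▸ Matrix.isDiag_diagonal μ⟩,
    ⟨b, hAs, toMatrix_eq_diagonal hAb ▸ Matrix.isDiag_diagonal θ⟩⟩

theorem isLeonardSystem_basisProj (hAb : IdempSysOf d A θ (basisProj b))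
    (hAse : IdempSysOf d As μ (basisProj e)) (hA : IsIrredTridiag (LinearMap.toMatrix e e A))
    (hAs : IsIrredTridiag (LinearMap.toMatrix b b As)) :
    IsLeonardSystem d A (basisProj b) As (basisProj e) :=
  have hA' := isIrredTridiag_toMatrix_iff.mp hA
  have hAs' := isIrredTridiag_toMatrix_iff.mp hAs
  ⟨⟨θ, hAb⟩, ⟨μ, hAse⟩, hA'.1, hA'.2, hAs'.1, hAs'.2⟩

end LeonardPairs

/-- **First main theorem** (Theorem 3.1 of the paper).
Given a system of mutually orthogonal idempotents `Es`, a suitably tridiagonal `A`,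
`As = Σ θs i • Es i`, and conditions (i)–(vi), the pair `A, As` is a Leonard pair on `V`,
`A` is multiplicity-free with eigenvalues `θ 0, …, θ d`, `As` is multiplicity-free with
eigenvalues `θs 0, …, θs d`, and `(A; E; As; Es)` is a Leonard system, where `E i` is the
primitive idempotent of `A` for `θ i`. -/
theorem first_main_theorem
    {F : Type*} [Field F] {V : Type*} [AddCommGroup V] [Module F V]
    (d : ℕ) (hd : 1 ≤ d) (hdim : Module.finrank F V = d + 1)
    (Es : Fin (d + 1) → Module.End F V) (hEs : MOISys d Es)
    (A : Module.End F V)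
    (hAfar : ∀ i j : Fin (d + 1), ((i : ℕ) + 1 < (j : ℕ) ∨ (j : ℕ) + 1 < (i : ℕ)) →
      Es i * A * Es j = 0)
    (hAnear : ∀ i j : Fin (d + 1), ((i : ℕ) + 1 = (j : ℕ) ∨ (j : ℕ) + 1 = (i : ℕ)) →
      Es i * A * Es j ≠ 0)
    (θs : ℤ → F) (As : Module.End F V)
    (hAs : As = ∑ i : Fin (d + 1), θs ((i : ℕ) : ℤ) • Es i)
    (θ : ℤ → F) (a : ℕ → F)
    (ha : ∀ i : Fin (d + 1), a i = LinearMap.trace F V (Es i * A))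
    -- (i)
    (h1 : ∀ i j : ℤ, 0 ≤ i → i ≤ d → 0 ≤ j → j ≤ d → i ≠ j → θ i ≠ θ j)
    -- (ii)
    (h2 : ∀ i : ℤ, 1 ≤ i → i ≤ d → θs i ≠ θs 0)
    -- (iii), with `θs (-1)` and `θs (d+1)` defined so that the recurrence holds at
    -- `i = 0` and `i = d` as well
    (β γs : F)
    (h3 : ∀ i : ℤ, 0 ≤ i → i ≤ d → γs = θs (i - 1) - β * θs i + θs (i + 1))
    -- (iv)
    (v0 v1 : V) (hv0 : v0 ≠ 0) (hv1 : v1 ≠ 0)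
    (hAv0 : A v0 = θ 0 • v0) (hAv1 : A v1 = θ 1 • v1)
    (hAsv01 : ∃ t : F, As v0 - v1 = t • v0)
    -- (v)
    (γ ω ηs : F)
    (h5 : ∀ i : ℕ, i ≤ d →
      a i * ((θs i - θs ((i : ℤ) - 1)) * (θs i - θs ((i : ℤ) + 1)))
        = γ * θs i ^ 2 + ω * θs i + ηs)
    -- (vi)
    (h6 : ∀ i : ℤ, 1 ≤ i → i ≤ (d : ℤ) - 1 → θ (i - 1) - β * θ i + θ (i + 1) = γ) :
    IsLeonardPair d A As ∧
    ∃ E : Fin (d + 1) → Module.End F V,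
      IdempSysOf d A (fun i : Fin (d + 1) => θ ((i : ℕ) : ℤ)) E ∧
      IdempSysOf d As (fun i : Fin (d + 1) => θs ((i : ℕ) : ℤ)) Es ∧
      IsLeonardSystem d A E As Es := by
  obtain ⟨e, rfl⟩ := hEs.exists_eq_basisProj hdim
  have hA : IsIrredTridiag (LinearMap.toMatrix e e A) :=
    isIrredTridiag_toMatrix_iff.mpr ⟨hAfar, hAnear⟩
  have hAse : ∀ i, As (e i) = θs (i : ℕ) • e i := fun i => by
    rw [hAs, sum_smul_basisProj_apply_basis]
  have haw : AskeyWilsonRel A As β γs (awPoly β γs (θs 0) (θs (-1))) γ ω ηs :=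
    askeyWilsonRel_of_tridiagonal hA.1 hAse (fun n hn => h3 n (by lia) (by lia)) fun i => by
      rw [← trace_basisProj_mul, ← ha, h5 i (by lia)]
  obtain ⟨t, ht⟩ := hAsv01
  have hθ : Set.InjOn (fun n : ℕ => θ n) (Set.Iio (d + 1)) := fun i hi j hj hij => by
    by_contra hne
    exact h1 i j (by lia) (by simpa using hi) (by lia) (by simpa using hj) (by simpa using hne) hij
  have hflag : IsTriangularOn A (fun n : ℕ => θ n) (krylov As v0) (d + 1) :=
    isTriangularOn_krylov <| haw.apply_pow_sub_smul_mem_krylov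
      (fun n hn => by simpa [add_assoc, one_add_one_eq_two] using h6 (n + 1) (by lia) (by lia))
      hAv0 (apply_apply_sub_smul_mem_span hAv0 hAv1 ht)
  obtain ⟨b, hAb, hAsb⟩ := hA.exists_eigenbasis_isIrredTridiag hAse
    (fun i hi => h2 i (mod_cast Fin.pos_of_ne_zero hi) (mod_cast i.is_le)) hv0 hθ hflag
  have hEA := idempSysOf_basisProj (hA.injective_of_eigenvectors b.linearIndependent hAb) hAb
  have hEAs := idempSysOf_basisProj (hAsb.injective_of_eigenvectors e.linearIndependent hAse) hAse
  exact ⟨isLeonardPair_of_eigenbases hAb hAse hA hAsb, basisProj b, hEA, hEAs,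
    isLeonardSystem_basisProj hEA hEAs hA hAsb⟩

end LeonardPaper
end

section
/- Let 𝔽 be a field and d ≥ 1 an integer. Let θ_{−1}, θ_0, θ_1 ∈ 𝔽, let {θ*_i}_{i=−1}^{d+1} be scalars in 𝔽, and let {a_i}_{i=0}^{d}, {b_i}_{i=0}^{d−1}, {c_i}_{i=1}^{d} be scalars in 𝔽; set b_d = c_0 = 0. Let β, γ, γ*, ω, a*_0 ∈ 𝔽 and suppose: γ = θ_{−1} − βθ_0 + θ_1; γ* = θ*_{i−1} − βθ*_i + θ*_{i+1} for 0 ≤ i ≤ d; c_i + a_i + b_i = θ_0 for 0 ≤ i ≤ d; c_i(θ*_{i−1} − θ*_i) − b_i(θ*_i − θ*_{i+1}) = (θ_1 − θ_0)(θ*_i − a*_0) for 0 ≤ i ≤ d; and a_i(θ*_i − θ*_{i+1}) + a_{i−1}(θ*_{i−1} − θ*_{i−2}) − γ(θ*_{i−1} + θ*_i) = ω for 1 ≤ i ≤ d. Then for 1 ≤ i ≤ d, c_i(θ*_{i−1} − θ*_{i+1}) − b_{i−1}(θ*_{i−2} − θ*_i) − (θ_0 − θ_{−1})(θ*_{i−1}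 + θ*_i) = Ω, where Ω = 2θ_0(a*_0 − γ*) − 2θ_1 a*_0 − ω. -/
/-!
Eliminating `a_i` by the row sum `c_i + a_i + b_i = θ_0` turns `a_i(θ*_i − θ*_{i+1})` into an
expression in `c_i`. The same elimination, with `b` and `c` exchanged and the sequence `θ*`
reversed, turns `a_{i-1}(θ*_{i-1} − θ*_{i-2})` into one in `b_{i-1}`. In the sum of the two, four
consecutive terms of `θ*` enter through `θ*_{i-1} + θ*_i − θ*_{i-2} − θ*_{i+1}`, which the
three-term recurrence makes an affine function of `θ*_{i-1} + θ*_i`.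
-/

section Ring

variable {R : Type*} [CommRing R]

theorem mul_sub_next_eq_of_row_sum {a b c θ t x y z : R} (hsum : c + a + b = θ)
    (hrow : c * (x - y) - b * (y - z) = t) :
    a * (y - z) = θ * (y - z) + t - c * (x - z) := by
  linear_combination (y - z) * hsum + hrow

theorem mul_sub_prev_eq_of_row_sum {a b c θ t x y z : R} (hsum : c + a + b = θ)
    (hrow : c * (x - y) - b * (y - z) = t) :
    a * (y - x) = θ * (y - x) + t + b * (x - z) := by
  have hsum_swap : b + a + c = θ := by rw [← hsum]; ring
  have hrow_swap : b * (z - y) - c * (y - x) = t := by rw [← hrow]; ring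
  rw [mul_sub_next_eq_of_row_sum hsum_swap hrow_swap]
  ring

theorem add_sub_add_eq_of_three_term_recurrence {β γ w x y z : R}
    (hx : γ = w - β * x + y) (hy : γ = x - β * y + z) :
    x + y - (w + z) = (2 - β) * (x + y) - 2 * γ := by
  linear_combination hx + hy

theorem split_Omega_identity_general (d : ℕ)
    (θm1 θ0 θ1 : R) (θs : ℤ → R) (a b c : ℕ → R)
    (β γ γs ω astar0 : R)
    (hγ : γ = θm1 - β * θ0 + θ1)
    (hγs : ∀ i : ℤ, 0 ≤ i → i ≤ d → γs = θs (i - 1) - β * θs i + θs (i + 1))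
    (hsum : ∀ i : ℕ, i ≤ d → c i + a i + b i = θ0)
    (hbici : ∀ i : ℕ, i ≤ d →
      c i * (θs ((i : ℤ) - 1) - θs i) - b i * (θs i - θs ((i : ℤ) + 1))
        = (θ1 - θ0) * (θs i - astar0))
    (hω : ∀ i : ℕ, 1 ≤ i → i ≤ d →
      a i * (θs i - θs ((i : ℤ) + 1)) + a (i - 1) * (θs ((i : ℤ) - 1) - θs ((i : ℤ) - 2))
        - γ * (θs ((i : ℤ) - 1) + θs i) = ω)
    (i : ℕ) (hi : 1 ≤ i) (hid : i ≤ d) :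
    c i * (θs ((i : ℤ) - 1) - θs ((i : ℤ) + 1)) - b (i - 1) * (θs ((i : ℤ) - 2) - θs i)
      - (θ0 - θm1) * (θs ((i : ℤ) - 1) + θs i)
      = 2 * θ0 * (astar0 - γs) - 2 * θ1 * astar0 - ω := by
  have hpred : ((i - 1 : ℕ) : ℤ) = i - 1 := Nat.cast_pred hi
  have hsub : (i : ℤ) - 1 - 1 = i - 2 := by ring
  have ha : a i * (θs i - θs (i + 1)) = θ0 * (θs i - θs (i + 1))
      + (θ1 - θ0) * (θs i - astar0) - c i * (θs (i - 1) - θs (i + 1)) :=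
    mul_sub_next_eq_of_row_sum (hsum i hid) (hbici i hid)
  have ha_pred : a (i - 1) * (θs (i - 1) - θs (i - 2)) = θ0 * (θs (i - 1) - θs (i - 2))
      + (θ1 - θ0) * (θs (i - 1) - astar0) + b (i - 1) * (θs (i - 2) - θs i) := by
    have hrow := hbici (i - 1) (by lia)
    rw [hpred, hsub, sub_add_cancel] at hrow
    exact mul_sub_prev_eq_of_row_sum (hsum (i - 1) (by lia)) hrow
  have hθs : θs (i - 1) + θs i - (θs (i - 2) + θs (i + 1))
      = (2 - β) * (θs (i - 1) + θs i) - 2 * γs := by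
    have hrec := hγs (i - 1) (by lia) (by lia)
    rw [hsub, sub_add_cancel] at hrec
    exact add_sub_add_eq_of_three_term_recurrence hrec (hγs i (by lia) (by lia))
  linear_combination ha + ha_pred + θ0 * hθs - hω i hi hid - (θs (i - 1) + θs i) * hγ

end Ring

/-- Proposition 2.8 of the paper: the algebraic identity
`c_i(θ*_{i-1} − θ*_{i+1}) − b_{i-1}(θ*_{i-2} − θ*_i) − (θ_0 − θ_{-1})(θ*_{i-1} + θ*_i) = Ω`
for `1 ≤ i ≤ d`, where `Ω = 2θ_0(a*_0 − γ*) − 2θ_1 a*_0 − ω`. -/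
theorem split_Omega_identity {F : Type*} [Field F]
    (d : ℕ) (hd : 1 ≤ d)
    (θm1 θ0 θ1 : F) (θs : ℤ → F)
    (a b c : ℕ → F) (hbd : b d = 0) (hc0 : c 0 = 0)
    (β γ γs ω astar0 : F)
    (hγ : γ = θm1 - β * θ0 + θ1)
    (hγs : ∀ i : ℤ, 0 ≤ i → i ≤ d → γs = θs (i - 1) - β * θs i + θs (i + 1))
    (hsum : ∀ i : ℕ, i ≤ d → c i + a i + b i = θ0)
    (hbici : ∀ i : ℕ, i ≤ d →
      c i * (θs ((i : ℤ) - 1) - θs i) - b i * (θs i - θs ((i : ℤ) + 1))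
        = (θ1 - θ0) * (θs i - astar0))
    (hω : ∀ i : ℕ, 1 ≤ i → i ≤ d →
      a i * (θs i - θs ((i : ℤ) + 1)) + a (i - 1) * (θs ((i : ℤ) - 1) - θs ((i : ℤ) - 2))
        - γ * (θs ((i : ℤ) - 1) + θs i) = ω) :
    ∀ i : ℕ, 1 ≤ i → i ≤ d →
      c i * (θs ((i : ℤ) - 1) - θs ((i : ℤ) + 1)) - b (i - 1) * (θs ((i : ℤ) - 2) - θs i)
        - (θ0 - θm1) * (θs ((i : ℤ) - 1) + θs i)
        = 2 * θ0 * (astar0 - γs) - 2 * θ1 * astar0 - ω :=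
  split_Omega_identity_general d θm1 θ0 θ1 θs a b c β γ γs ω astar0 hγ hγs hsum hbici hω
end
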